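/- Let d ≥ 2 and let K be a convex body in ℝ^d. Suppose that the closed ball B(z, r) of radius r > 0 satisfies B(z, r) ⊆ K, that x ∈ B(z, r) is a boundary point of K, and that N is a unit vector with ⟨w, N⟩ ≤ ⟨x, N⟩ for all w ∈ K (an outer unit normal of K at x). Let ε > 0 and y = x + ε·N. Then every unit vector u with h(K^y, u) > h(K, u) satisfies ⟨u, N⟩ ≥ r/(r + ε). -/

import Mathlib

open Metric Set
open scoped InnerProductSpace

/-- The support function of a set `K`: `h(K, u) = sup_{x ∈ K} ⟪x, u⟫`. -/
noncomputable def suppFn {d : ℕ} (K : Set (EuclideanSpace ℝ (Fin d)))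
    (u : EuclideanSpace ℝ (Fin d)) : ℝ :=
  sSup ((fun x => ⟪x, u⟫_ℝ) '' K)

/-- Every point of a compact set lies below the support function. -/
theorem inner_le_suppFn {d : ℕ} {K : Set (EuclideanSpace ℝ (Fin d))} (hK : IsCompact K)
    {w : EuclideanSpace ℝ (Fin d)} (hw : w ∈ K) (u : EuclideanSpace ℝ (Fin d)) :
    ⟪w, u⟫_ℝ ≤ suppFn K u :=
  le_csSup (hK.image (by fun_prop)).bddAbove (mem_image_of_mem _ hw)

/-- Adding a point below the support function in direction `u` does not increase it. -/
theorem suppFn_convexHull_union_singleton_le {d : ℕ} {K : Set (EuclideanSpace ℝ (Fin d))}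
    (hK : IsCompact K) (hne : K.Nonempty) {y u : EuclideanSpace ℝ (Fin d)}
    (hy : ⟪y, u⟫_ℝ ≤ suppFn K u) :
    suppFn (convexHull ℝ (K ∪ {y})) u ≤ suppFn K u := by
  have hsub : convexHull ℝ (K ∪ {y}) ⊆ {w | ⟪w, u⟫_ℝ ≤ suppFn K u} := by
    refine convexHull_min ?_ (convex_halfSpace_le
      ⟨fun a b => inner_add_left a b u, fun c a => real_inner_smul_left a u c⟩ _)
    rintro w (hw | rfl)
    · exact inner_le_suppFn hK hw u
    · exact hy
  refine csSup_le ((hne.mono subset_union_left).convexHull.image _) ?_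
  rintro _ ⟨w, hw, rfl⟩
  exact hsub hw

theorem add_smul_mem_closedBall {E : Type*} [SeminormedAddCommGroup E] [NormedSpace ℝ E]
    (z : E) {r : ℝ} (hr : 0 ≤ r) {u : E} (hu : ‖u‖ = 1) : z + r • u ∈ closedBall z r := by
  simp [norm_smul, hu, abs_of_nonneg hr]

/-- A point of a ball inside `K` at which `K` has outer unit normal `N` is the point of the ball
that is extreme in direction `N`. -/
theorem eq_add_smul_of_ball_normal {E : Type*} [NormedAddCommGroup E] [InnerProductSpace ℝ E]
    {K : Set E} {z x N : E} {r : ℝ} (hr : 0 < r) (hball : closedBall z r ⊆ K)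
    (hx : x ∈ closedBall z r) (hN : ‖N‖ = 1) (hnormal : ∀ w ∈ K, ⟪w, N⟫_ℝ ≤ ⟪x, N⟫_ℝ) :
    x = z + r • N := by
  have h := hnormal _ (hball (add_smul_mem_closedBall z hr.le hN))
  rw [inner_add_left, real_inner_smul_left, real_inner_self_eq_norm_sq, hN] at h
  rw [mem_closedBall, dist_eq_norm] at hx
  have hsq : ‖(x - z) - r • N‖ ^ 2 ≤ 0 := by
    rw [norm_sub_sq_real, real_inner_smul_right, inner_sub_left, norm_smul, hN,
      Real.norm_of_nonneg hr.le]
    nlinarith [norm_nonneg (x - z)]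
  have h0 : (x - z) - r • N = 0 :=
    norm_eq_zero.1 (pow_eq_zero_iff two_ne_zero |>.1 (le_antisymm hsq (sq_nonneg _)))
  rw [← sub_eq_zero, ← h0]
  abel

theorem statement8 {d : ℕ} (hd : 2 ≤ d) (K : Set (EuclideanSpace ℝ (Fin d)))
    (hKcomp : IsCompact K) (hKconv : Convex ℝ K) (hKint : (interior K).Nonempty)
    (z : EuclideanSpace ℝ (Fin d)) (r : ℝ) (hr : 0 < r)
    (hball : closedBall z r ⊆ K)
    (x : EuclideanSpace ℝ (Fin d)) (hxball : x ∈ closedBall z r) (hxbd : x ∈ frontier K)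
    (N : EuclideanSpace ℝ (Fin d)) (hN : ‖N‖ = 1)
    (hnormal : ∀ w ∈ K, ⟪w, N⟫_ℝ ≤ ⟪x, N⟫_ℝ)
    (ε : ℝ) (hε : 0 < ε)
    (y : EuclideanSpace ℝ (Fin d)) (hy : y = x + ε • N) :
    ∀ u : EuclideanSpace ℝ (Fin d), ‖u‖ = 1 →
      suppFn K u < suppFn (convexHull ℝ (K ∪ {y})) u →
      r / (r + ε) ≤ ⟪u, N⟫_ℝ := by
  intro u hu hlt
  have hxz : x = z + r • N := eq_add_smul_of_ball_normal hr hball hxball hN hnormal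
  have hlow : ⟪z, u⟫_ℝ + r ≤ suppFn K u := by
    have := inner_le_suppFn hKcomp (hball (add_smul_mem_closedBall z hr.le hu)) u
    simpa [inner_add_left, real_inner_smul_left, real_inner_self_eq_norm_sq, hu] using this
  have hyu : suppFn K u < ⟪y, u⟫_ℝ := by
    by_contra! hle
    exact hlt.not_ge (suppFn_convexHull_union_singleton_le hKcomp
      ⟨z, hball (mem_closedBall_self hr.le)⟩ hle)
  rw [hy, hxz, inner_add_left, inner_add_left, real_inner_smul_left, real_inner_smul_left,
    real_inner_comm u N] at hyu
  rw [div_le_iff₀ (by positivity)]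
  linarith
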